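/- For each m ∈ ℕ there is a constant c(m) > 0 such that for all d, n ∈ ℕ and every F ∈ 𝔉_d^s one has sup over k ∈ ℕ with k ≤ √n of ρ_m(F^n, F^{n+k}) ≤ c(m) · n^{−1/2}. -/

import Mathlib

open MeasureTheory RealInnerProductSpace
open scoped ENNReal

noncomputable section

abbrev Euc (d : ℕ) := EuclideanSpace ℝ (Fin d)

/-- Convolution of two measures on an additive structure. -/
def mconv {α : Type*} [MeasurableSpace α] [Add α] (μ ν : Measure α) : Measure α :=
  (μ.prod ν).map (fun p => p.1 + p.2)

/-- Convolution power `μ^{*n}`, with `μ^{*0}` the Dirac measure at `0`. -/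
def convPow {α : Type*} [MeasurableSpace α] [AddMonoid α] (μ : Measure α) : ℕ → Measure α
  | 0 => Measure.dirac 0
  | n + 1 => mconv (convPow μ n) μ

/-- Convolution product of a finite family of measures. -/
def convProd {α : Type*} [MeasurableSpace α] [AddMonoid α] :
    ∀ {n : ℕ}, (Fin n → Measure α) → Measure α
  | 0, _ => Measure.dirac 0
  | n + 1, G => mconv (convProd (fun i : Fin n => G i.castSucc)) (G (Fin.last n))

/-- The compound Poisson measure `e(a·μ) = e^{-a} ∑_k a^k μ^{*k}/k!`. -/
def cpois {α : Type*} [MeasurableSpace α] [AddMonoid α] (a : ℝ) (μ : Measure α) : Measure α :=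
  Measure.sum fun k : ℕ =>
    (ENNReal.ofReal (Real.exp (-a) * a ^ k / k.factorial)) • convPow μ k

/-- A measure is symmetric if it is invariant under `x ↦ -x`. -/
def IsSymmMeasure {d : ℕ} (μ : Measure (Euc d)) : Prop :=
  μ.map (fun x => -x) = μ

/-- Characteristic function of a measure on `ℝ^d`. -/
def charFn {d : ℕ} (μ : Measure (Euc d)) (t : Euc d) : ℂ :=
  ∫ x, Complex.exp ((⟪t, x⟫ : ℂ) * Complex.I) ∂μ

/-- Characteristic function of a measure on `ℝ`. -/
def charFn1 (μ : Measure ℝ) (t : ℝ) : ℂ :=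
  ∫ x, Complex.exp (((t * x : ℝ) : ℂ) * Complex.I) ∂μ

/-- Convex polyhedra determined by the directions `t 1, …, t m`. -/
def polyhedraOn {d m : ℕ} (t : Fin m → Euc d) : Set (Set (Euc d)) :=
  {X | ∃ a b : Fin m → EReal,
    X = {x | ∀ j, a j ≤ ((⟪x, t j⟫ : ℝ) : EReal) ∧ ((⟪x, t j⟫ : ℝ) : EReal) ≤ b j}}

/-- The collection `𝔛_m` of convex polyhedra determined by `m` pairs of parallel hyperplanes. -/
def polyhedra (d m : ℕ) : Set (Set (Euc d)) :=
  {X | ∃ t : Fin m → Euc d, X ∈ polyhedraOn t}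

/-- The distance `ρ_m(G,H) = sup_{X ∈ 𝔛_m} |G{X} - H{X}|`. -/
def rhoPoly {d : ℕ} (m : ℕ) (G H : Measure (Euc d)) : ℝ :=
  ⨆ X ∈ polyhedra d m, |(G X).toReal - (H X).toReal|

/-- The Lévy concentration function `Q(μ, b) = sup_x μ[x, x+b]`. -/
def concFn (μ : Measure ℝ) (b : ℝ) : ℝ :=
  ⨆ x : ℝ, (μ (Set.Icc x (x + b))).toReal

/-- `q(H, X) = inf_{‖t‖=1} Q(𝓛(⟨ξ,t⟩), λ{⟨x,t⟩ : x ∈ X})` where `H = 𝓛(ξ)`. -/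
def qFn {d : ℕ} (H : Measure (Euc d)) (X : Set (Euc d)) : ℝ :=
  ⨅ t ∈ {t : Euc d | ‖t‖ = 1},
    concFn (H.map fun x => ⟪x, t⟫) (volume ((fun x => ⟪x, t⟫) '' X)).toReal

/-- The uniform (Kolmogorov) distance on `ℝ^d`. -/
def kolmDist {d : ℕ} (G H : Measure (Euc d)) : ℝ :=
  ⨆ x : Euc d, |(G {y | ∀ i, y i ≤ x i}).toReal - (H {y | ∀ i, y i ≤ x i}).toReal|

/-- The uniform (Kolmogorov) distance on `ℝ`. -/
def kolmDist1 (G H : Measure ℝ) : ℝ :=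
  ⨆ x : ℝ, |(G (Set.Iic x)).toReal - (H (Set.Iic x)).toReal|

end

/-
Write a sum of independent symmetric variables as `∑ ε i * y i` with independent uniform signs `ε`
and condition on `y`, so that everything becomes a statement on the discrete cube, uniform in `y`.

The half-sum of two signed sums `S x` and `S x'` over `2 n + 2` summands is a signed sum over the
places where `x` and `x'` agree. Hence `F ^ n - F ^ (n + 2)` is an average of a kernel `w (x ∆ x')`
charging only the distances `n` and `n + 2`, and the half-sum lies in a polyhedron when finitely
many comparisons `α l x ≤ β l x'` hold. The Fourier coefficients of `w` are Krawtchouk numbers,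
small enough for Bonami's inequality to bound the sums of `w` over all rectangles with a power gain,
and a dyadic median decomposition turns this gain into a bound over any intersection of comparison
regions. This gives a distance `O(1 / n)` between `F ^ n` and `F ^ (n + 2)`, hence `O(1 / √n)` for
even `k ≤ √n`. One extra step costs `O(1 / √n)`: a threshold function of `∑ ε i * a i` has total
influence `O(√n)`, since it is monotone in every coordinate.
-/

section Walsh

open scoped symmDiff

variable {ι : Type*} [DecidableEq ι]

/-- Coordinate `i` of the point of the cube `{1, -1} ^ ι` whose set of negative coordinates is
`x`; throughout, `Finset ι` is this cube and `∆` its group operation. -/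
def cubeSign (x : Finset ι) (i : ι) : ℝ := if i ∈ x then -1 else 1

/-- The Walsh character of the cube `Finset ι` indexed by `S`. -/
def walsh (S x : Finset ι) : ℝ := ∏ i ∈ S, cubeSign x i

lemma cubeSign_mul_self (x : Finset ι) (i : ι) : cubeSign x i * cubeSign x i = 1 := by
  unfold cubeSign
  split_ifs <;> norm_num

lemma cubeSign_symmDiff (x y : Finset ι) (i : ι) :
    cubeSign (x ∆ y) i = cubeSign x i * cubeSign y i := by
  by_cases hx : i ∈ x <;> by_cases hy : i ∈ y <;> simp [cubeSign, Finset.mem_symmDiff, hx, hy]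

lemma cubeSign_symmDiff_singleton_self (x : Finset ι) (i : ι) :
    cubeSign (x ∆ {i}) i = -cubeSign x i := by
  rw [cubeSign_symmDiff, cubeSign, cubeSign, if_pos (Finset.mem_singleton_self i), mul_neg_one]

lemma walsh_symmDiff (S x y : Finset ι) : walsh S (x ∆ y) = walsh S x * walsh S y := by
  simp only [walsh, cubeSign_symmDiff, Finset.prod_mul_distrib]

lemma walsh_mul_self (S x : Finset ι) : walsh S x * walsh S x = 1 := by
  simp only [walsh, ← Finset.prod_mul_distrib, cubeSign_mul_self, Finset.prod_const_one]

lemma abs_walsh (S x : Finset ι) : |walsh S x| = 1 :=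
  (pow_eq_one_iff_of_nonneg (abs_nonneg _) two_ne_zero).1 (by rw [sq_abs, sq, walsh_mul_self])

lemma walsh_comm (S x : Finset ι) : walsh S x = walsh x S := by
  simp only [walsh, cubeSign, Finset.prod_ite, Finset.prod_const, one_pow, mul_one,
    Finset.filter_mem_eq_inter, Finset.inter_comm]

lemma walsh_insert {a : ι} {S : Finset ι} (ha : a ∉ S) (x : Finset ι) :
    walsh (insert a S) x = cubeSign x a * walsh S x :=
  Finset.prod_insert ha

lemma walsh_insert_right {a : ι} {S : Finset ι} (ha : a ∉ S) (x : Finset ι) :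
    walsh S (insert a x) = walsh S x :=
  Finset.prod_congr rfl fun i hi => by
    simp [cubeSign, ne_of_mem_of_not_mem hi ha]

variable [Fintype ι]

lemma sum_walsh (x : Finset ι) :
    ∑ S, walsh S x = if x = ∅ then 2 ^ Fintype.card ι else 0 := by
  have hprod : ∑ S, walsh S x = ∏ i, (1 + cubeSign x i) := by
    rw [Finset.prod_one_add, Finset.powerset_univ]
    rfl
  rw [hprod]
  split_ifs with hx
  · norm_num [hx, cubeSign, Finset.card_univ]
  · obtain ⟨i, hi⟩ := Finset.nonempty_iff_ne_empty.2 hx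
    exact Finset.prod_eq_zero (Finset.mem_univ i) (by simp [cubeSign, hi])

/-- The unnormalised Fourier transform on the cube. -/
def walshTransform (g : Finset ι → ℝ) (S : Finset ι) : ℝ := ∑ x, g x * walsh S x

lemma sum_walshTransform_mul (g h : Finset ι → ℝ) :
    ∑ S, walshTransform g S * walshTransform h S = 2 ^ Fintype.card ι * ∑ x, g x * h x := by
  have horth (x y : Finset ι) :
      ∑ S, walsh S x * walsh S y = if x = y then 2 ^ Fintype.card ι else 0 := by
    simp only [← walsh_symmDiff, sum_walsh, ← Finset.bot_eq_empty, symmDiff_eq_bot]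
  calc ∑ S, walshTransform g S * walshTransform h S
      = ∑ x, ∑ y, g x * h y * ∑ S, walsh S x * walsh S y := by
        simp only [walshTransform, Finset.sum_mul_sum]
        rw [Finset.sum_comm]
        refine Finset.sum_congr rfl fun x _ => ?_
        rw [Finset.sum_comm]
        simp only [Finset.mul_sum, mul_mul_mul_comm]
    _ = 2 ^ Fintype.card ι * ∑ x, g x * h x := by
        simp only [horth, mul_ite, mul_zero, Finset.sum_ite_eq, Finset.mem_univ, if_true,
          Finset.mul_sum]
        exact Finset.sum_congr rfl fun x _ => mul_comm _ _

lemma walshTransform_convolution (w h : Finset ι → ℝ) (S : Finset ι) :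
    walshTransform (fun x => ∑ y, w (x ∆ y) * h y) S = walshTransform w S * walshTransform h S := by
  calc walshTransform (fun x => ∑ y, w (x ∆ y) * h y) S
      = ∑ y, ∑ x, w (x ∆ y) * h y * walsh S x := by
        simp only [walshTransform, Finset.sum_mul]
        exact Finset.sum_comm
    _ = ∑ y, ∑ x, w x * h y * (walsh S x * walsh S y) := by
        refine Finset.sum_congr rfl fun y _ => ?_
        rw [← Equiv.sum_comp (symmDiff_left_involutive y).toPerm]
        refine Finset.sum_congr rfl fun x _ => ?_
        simp only [Function.Involutive.coe_toPerm, symmDiff_symmDiff_cancel_right, walsh_symmDiff]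
    _ = walshTransform w S * walshTransform h S := by
        simp only [walshTransform, Finset.sum_mul_sum]
        rw [Finset.sum_comm]
        exact Finset.sum_congr rfl fun x _ => Finset.sum_congr rfl fun y _ => by ring

lemma walshTransform_compl (g : Finset ι → ℝ) (S : Finset ι) :
    walshTransform g Sᶜ = walshTransform (fun x => g x * walsh Finset.univ x) S := by
  refine Finset.sum_congr rfl fun x _ => ?_
  have hsplit : walsh S x * walsh Sᶜ x = walsh Finset.univ x :=
    Finset.prod_mul_prod_compl S _
  linear_combination g x * walsh S x * hsplit - g x * walsh Sᶜ x * walsh_mul_self S x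

end Walsh

section Hypercontractivity

variable {ι : Type*} [DecidableEq ι]

lemma sum_add_pow_four_add_sub_pow_four_le {α : Type*} (s : Finset α) (P Q : α → ℝ) {t A B : ℝ}
    (ht : 0 ≤ t) (hA : 0 ≤ A) (hB : 0 ≤ B) (hP : ∑ x ∈ s, P x ^ 4 ≤ t * A ^ 2)
    (hQ : ∑ x ∈ s, Q x ^ 4 ≤ t * B ^ 2) :
    ∑ x ∈ s, ((P x + Q x) ^ 4 + (P x - Q x) ^ 4) ≤ 2 * t * (A + 3 * B) ^ 2 := by
  have hPQ : ∑ x ∈ s, P x ^ 2 * Q x ^ 2 ≤ t * A * B := by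
    refine abs_le_of_sq_le_sq' ?_ (by positivity) |>.2
    calc (∑ x ∈ s, P x ^ 2 * Q x ^ 2) ^ 2
        ≤ (∑ x ∈ s, (P x ^ 2) ^ 2) * ∑ x ∈ s, (Q x ^ 2) ^ 2 :=
          Finset.sum_mul_sq_le_sq_mul_sq s _ _
      _ ≤ (t * A ^ 2) * (t * B ^ 2) := by
          simp only [← pow_mul, Nat.reduceMul]
          gcongr
      _ = (t * A * B) ^ 2 := by ring
  calc ∑ x ∈ s, ((P x + Q x) ^ 4 + (P x - Q x) ^ 4)
      = 2 * ∑ x ∈ s, P x ^ 4 + 12 * ∑ x ∈ s, P x ^ 2 * Q x ^ 2 + 2 * ∑ x ∈ s, Q x ^ 4 := by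
        simp only [Finset.mul_sum, ← Finset.sum_add_distrib]
        exact Finset.sum_congr rfl fun x _ => by ring
    _ ≤ 2 * (t * A ^ 2) + 12 * (t * A * B) + 2 * (t * B ^ 2) := by gcongr
    _ ≤ 2 * t * (A + 3 * B) ^ 2 := by nlinarith [mul_nonneg ht (sq_nonneg B)]

lemma bonami_fourth_moment_le (U : Finset ι) (c : Finset ι → ℝ) :
    ∑ x ∈ U.powerset, (∑ S ∈ U.powerset, c S * walsh S x) ^ 4 ≤
      2 ^ U.card * (∑ S ∈ U.powerset, 3 ^ S.card * c S ^ 2) ^ 2 := by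
  induction U using Finset.induction_on generalizing c with
  | empty => simp [walsh, ← pow_mul]
  | insert a U ha ih =>
    set P : Finset ι → ℝ := fun x => ∑ S ∈ U.powerset, c S * walsh S x
    set Q : Finset ι → ℝ := fun x => ∑ S ∈ U.powerset, c (insert a S) * walsh S x
    have hnot {S : Finset ι} (hS : S ∈ U.powerset) : a ∉ S :=
      fun h => ha (Finset.mem_powerset.1 hS h)
    have hvalue (x : Finset ι) : ∑ S ∈ (insert a U).powerset, c S * walsh S x =
        ∑ S ∈ U.powerset, c S * walsh S x
          + cubeSign x a * ∑ S ∈ U.powerset, c (insert a S) * walsh S x := by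
      rw [Finset.sum_powerset_insert ha, Finset.mul_sum]
      congr 1
      exact Finset.sum_congr rfl fun S hS => by rw [walsh_insert (hnot hS)]; ring
    have hpos (x) (hx : x ∈ U.powerset) :
        ∑ S ∈ (insert a U).powerset, c S * walsh S x = P x + Q x := by
      rw [hvalue, cubeSign, if_neg (hnot hx), one_mul]
    have hneg (x : Finset ι) :
        ∑ S ∈ (insert a U).powerset, c S * walsh S (insert a x) = P x - Q x := by
      rw [hvalue, cubeSign, if_pos (Finset.mem_insert_self a x), neg_one_mul, ← sub_eq_add_neg]
      congr 1 <;> exact Finset.sum_congr rfl fun S hS => by rw [walsh_insert_right (hnot hS)]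
    have hweight : ∑ S ∈ (insert a U).powerset, (3 : ℝ) ^ S.card * c S ^ 2 =
        ∑ S ∈ U.powerset, 3 ^ S.card * c S ^ 2
          + 3 * ∑ S ∈ U.powerset, 3 ^ S.card * c (insert a S) ^ 2 := by
      rw [Finset.sum_powerset_insert ha, Finset.mul_sum]
      congr 1
      exact Finset.sum_congr rfl fun S hS => by rw [Finset.card_insert_of_notMem (hnot hS)]; ring
    rw [Finset.sum_powerset_insert ha, hweight, Finset.card_insert_of_notMem ha, pow_succ',
      ← Finset.sum_add_distrib]
    simp only [hneg]
    rw [Finset.sum_congr rfl fun x hx => by rw [hpos x hx]]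
    exact sum_add_pow_four_add_sub_pow_four_le _ P Q (by positivity) (by positivity)
      (by positivity) (ih c) (ih fun S => c (insert a S))

variable [Fintype ι]

lemma sq_sum_low_level_weight_le {g : Finset ι → ℝ} {I : Finset (Finset ι)}
    (hg : ∀ x, |g x| ≤ 1) (hI : ∀ x ∉ I, g x = 0) :
    (∑ S, (1 / 3) ^ S.card * walshTransform g S ^ 2) ^ 2 ≤
      2 ^ Fintype.card ι * (I.card : ℝ) ^ 3 := by
  set W := ∑ S, (1 / 3) ^ S.card * walshTransform g S ^ 2
  set H : Finset ι → ℝ := fun x => ∑ S, (1 / 3) ^ S.card * walshTransform g S * walsh S x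
  have hW : 0 ≤ W := by positivity
  have hdual : W = ∑ x ∈ I, g x * H x := by
    rw [Finset.sum_subset (Finset.subset_univ I) fun x _ hx => by rw [hI x hx, zero_mul]]
    simp only [W, H, Finset.mul_sum]
    rw [Finset.sum_comm]
    refine Finset.sum_congr rfl fun S _ => ?_
    rw [sq, ← mul_assoc]
    nth_rewrite 2 [walshTransform]
    rw [Finset.mul_sum]
    exact Finset.sum_congr rfl fun x _ => by ring
  have hH : ∑ x ∈ I, |H x| ^ 4 ≤ 2 ^ Fintype.card ι * W ^ 2 := by
    have hweight : ∑ S, (3 : ℝ) ^ S.card * ((1 / 3) ^ S.card * walshTransform g S) ^ 2 = W :=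
      Finset.sum_congr rfl fun S _ => by
        rw [mul_pow, ← pow_mul, mul_comm S.card, pow_mul, ← mul_assoc, ← mul_pow]
        norm_num
    have hbonami := bonami_fourth_moment_le (Finset.univ : Finset ι)
      fun S => (1 / 3) ^ S.card * walshTransform g S
    rw [Finset.powerset_univ, hweight, Finset.card_univ] at hbonami
    refine le_trans (Finset.sum_le_univ_sum_of_nonneg fun x => by positivity) ?_
    simpa only [Even.pow_abs (by decide : Even 4)] using hbonami
  have hpow : W ^ 4 ≤ (2 ^ Fintype.card ι * (I.card : ℝ) ^ 3) * W ^ 2 := by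
    calc W ^ 4 ≤ (∑ x ∈ I, |H x|) ^ 4 := by
          gcongr
          rw [hdual]
          refine Finset.sum_le_sum fun x _ => (le_abs_self _).trans ?_
          rw [abs_mul]
          exact mul_le_of_le_one_left (abs_nonneg _) (hg x)
      _ ≤ (I.card : ℝ) ^ 3 * ∑ x ∈ I, |H x| ^ 4 :=
          pow_sum_le_card_mul_sum_pow (fun x _ => abs_nonneg (H x)) 3
      _ ≤ (I.card : ℝ) ^ 3 * (2 ^ Fintype.card ι * W ^ 2) := by gcongr
      _ = _ := by ring
  rcases hW.eq_or_lt with h0 | hpos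
  · rw [← h0, zero_pow two_ne_zero]
    positivity
  · refine le_of_mul_le_mul_right ?_ (pow_pos hpos 2)
    rwa [← pow_add]

lemma sq_sum_high_level_weight_le {g : Finset ι → ℝ} {I : Finset (Finset ι)}
    (hg : ∀ x, |g x| ≤ 1) (hI : ∀ x ∉ I, g x = 0) :
    (∑ S : Finset ι, (1 / 3) ^ Sᶜ.card * walshTransform g S ^ 2) ^ 2 ≤
      2 ^ Fintype.card ι * (I.card : ℝ) ^ 3 := by
  rw [← Equiv.sum_comp compl_involutive.toPerm]
  simp only [Function.Involutive.coe_toPerm, compl_compl, walshTransform_compl]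
  exact sq_sum_low_level_weight_le (fun x => by rw [abs_mul, abs_walsh, mul_one]; exact hg x)
    fun x hx => by rw [hI x hx, zero_mul]

end Hypercontractivity

section RectBounded

variable {X Y L : Type*}

/-- The kernel `K` has small sums over combinatorial rectangles: the sum over `I × J` is at most
`C |I| ^ δ √(|I| |J|)`. The exponent `δ > 0` is what makes the median recursion in
`RectBounded.ite_le` summable. -/
def RectBounded (K : X → Y → ℝ) (δ C : ℝ) : Prop :=
  ∀ (I : Finset X) (J : Finset Y),
    |∑ x ∈ I, ∑ y ∈ J, K x y| ≤ C * (I.card : ℝ) ^ δ * √(I.card * J.card)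

lemma sqrt_mul_add_sqrt_mul_le {a b c d : ℝ} (ha : 0 ≤ a) (hb : 0 ≤ b) (hc : 0 ≤ c) (hd : 0 ≤ d) :
    √(a * b) + √(c * d) ≤ √((a + c) * (b + d)) := by
  have h := Real.sum_sqrt_mul_sqrt_le (Finset.univ : Finset (Fin 2)) (f := ![a, c]) (g := ![b, d])
    (by simp [Fin.forall_fin_two, ha, hc]) (by simp [Fin.forall_fin_two, hb, hd])
  simpa [Fin.sum_univ_two, Real.sqrt_mul, ha, hc, add_nonneg] using h

variable [LinearOrder L]

lemma exists_subset_card_eq_forall_le [DecidableEq X] (f : X → L) (s : Finset X) {k : ℕ}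
    (hk : k ≤ s.card) : ∃ t ⊆ s, t.card = k ∧ ∀ x ∈ t, ∀ y ∈ s \ t, f x ≤ f y := by
  induction k with
  | zero => exact ⟨∅, Finset.empty_subset s, rfl, by simp⟩
  | succ k ih =>
    obtain ⟨t, hts, htk, hle⟩ := ih (by omega)
    have hne : (s \ t).Nonempty := by
      rw [← Finset.card_pos, Finset.card_sdiff_of_subset hts]
      omega
    obtain ⟨y, hy, hmin⟩ := Finset.exists_min_image (s \ t) f hne
    obtain ⟨hys, hyt⟩ := Finset.mem_sdiff.1 hy
    refine ⟨insert y t, Finset.insert_subset hys hts, by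
      rw [Finset.card_insert_of_notMem hyt, htk], fun x hx z hz => ?_⟩
    have hz' : z ∈ s \ t := Finset.sdiff_subset_sdiff le_rfl (Finset.subset_insert y t) hz
    rcases Finset.mem_insert.1 hx with rfl | hxt
    · exact hmin z hz'
    · exact hle x hxt z hz'

lemma exists_median_split [DecidableEq X] (f : X → L) {s : Finset X} (hs : s.Nonempty) :
    ∃ (p : X) (s₁ s₂ : Finset X), s = s₁ ∪ insert p s₂ ∧ Disjoint s₁ (insert p s₂) ∧ p ∉ s₂ ∧
      2 * s₁.card ≤ s.card ∧ 2 * s₂.card ≤ s.card ∧ (∀ x ∈ s₁, f x ≤ f p) ∧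
      ∀ x ∈ s₂, f p ≤ f x := by
  obtain ⟨t, hts, htk, hle⟩ := exists_subset_card_eq_forall_le f s (Nat.div_le_self s.card 2)
  have hcard : (s \ t).card = s.card - s.card / 2 := by rw [Finset.card_sdiff_of_subset hts, htk]
  have hpos := hs.card_pos
  obtain ⟨p, hp, hmin⟩ := Finset.exists_min_image (s \ t) f (Finset.card_pos.1 (by omega))
  refine ⟨p, t, (s \ t).erase p, ?_, ?_, Finset.notMem_erase p _, by omega, ?_,
    fun x hx => hle x hx p hp, fun x hx => hmin x (Finset.mem_of_mem_erase hx)⟩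
  · rw [Finset.insert_erase hp, Finset.union_sdiff_of_subset hts]
  · rw [Finset.insert_erase hp]
    exact Finset.disjoint_sdiff
  · rw [Finset.card_erase_of_mem hp]
    omega

/-- Split `I` at its `α`-median `p`. The values with `α x ≤ α p ≤ β y` form a full rectangle, those
with `β y < α p ≤ α x` contribute nothing, and the two remaining blocks have at most half as many
rows. -/
lemma sum_ite_le_eq_of_median [DecidableEq X] (K : X → Y → ℝ) (α : X → L) (β : Y → L)
    {p : X} {I₁ I₂ : Finset X} (J : Finset Y) (hdisj : Disjoint I₁ (insert p I₂)) (hp : p ∉ I₂)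
    (h₁ : ∀ x ∈ I₁, α x ≤ α p) (h₂ : ∀ x ∈ I₂, α p ≤ α x) :
    ∑ x ∈ I₁ ∪ insert p I₂, ∑ y ∈ J, (if α x ≤ β y then K x y else 0) =
      ∑ x ∈ I₁, ∑ y ∈ J with β y < α p, (if α x ≤ β y then K x y else 0)
      + ∑ x ∈ insert p I₁, ∑ y ∈ J with α p ≤ β y, K x y
      + ∑ x ∈ I₂, ∑ y ∈ J with α p ≤ β y, (if α x ≤ β y then K x y else 0) := by
  have hsplit (x : X) : ∑ y ∈ J, (if α x ≤ β y then K x y else 0) =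
      ∑ y ∈ J with α p ≤ β y, (if α x ≤ β y then K x y else 0)
      + ∑ y ∈ J with β y < α p, (if α x ≤ β y then K x y else 0) := by
    simp only [← not_le]
    exact (Finset.sum_filter_add_sum_filter_not J _ _).symm
  have hfull (x : X) (hx : α x ≤ α p) :
      ∑ y ∈ J with α p ≤ β y, (if α x ≤ β y then K x y else 0) =
        ∑ y ∈ J with α p ≤ β y, K x y :=
    Finset.sum_congr rfl fun y hy => if_pos (hx.trans (Finset.mem_filter.1 hy).2)
  have hzero (x : X) (hx : α p ≤ α x) :
      ∑ y ∈ J with β y < α p, (if α x ≤ β y then K x y else 0) = 0 :=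
    Finset.sum_eq_zero fun y hy => if_neg (not_le.2 ((Finset.mem_filter.1 hy).2.trans_le hx))
  have hp₁ : p ∉ I₁ := fun h => Finset.disjoint_left.1 hdisj h (Finset.mem_insert_self p I₂)
  rw [Finset.sum_union hdisj, Finset.sum_insert hp, Finset.sum_insert hp₁,
    Finset.sum_congr rfl fun x hx => by rw [hsplit, hfull x (h₁ x hx)],
    Finset.sum_congr (s₁ := I₂) rfl fun x hx => by rw [hsplit, hzero x (h₂ x hx), add_zero],
    hsplit p, hfull p le_rfl, hzero p le_rfl, Finset.sum_add_distrib]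
  ring

lemma RectBounded.abs_sum_ite_le_of_halves {K : X → Y → ℝ} {δ C E : ℝ} (hK : RectBounded K δ C)
    (hδ : 0 ≤ δ) (hC : 0 ≤ C) (hE : 0 ≤ E) (α : X → L) (β : Y → L) {I : Finset X}
    (hI : I.Nonempty)
    (hhalf : ∀ I' : Finset X, 2 * I'.card ≤ I.card → ∀ J' : Finset Y,
      |∑ x ∈ I', ∑ y ∈ J', (if α x ≤ β y then K x y else 0)| ≤ E * √(I'.card * J'.card))
    (J : Finset Y) :
    |∑ x ∈ I, ∑ y ∈ J, (if α x ≤ β y then K x y else 0)| ≤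
      (E + C * (I.card : ℝ) ^ δ) * √(I.card * J.card) := by
  classical
  obtain ⟨p, I₁, I₂, rfl, hdisj, hp, hc₁, hc₂, h₁, h₂⟩ := exists_median_split α hI
  set I := I₁ ∪ insert p I₂
  set J₁ := J.filter fun y => β y < α p
  set J₂ := J.filter fun y => α p ≤ β y
  have hrect : |∑ x ∈ insert p I₁, ∑ y ∈ J₂, K x y| ≤
      C * (I.card : ℝ) ^ δ * √(I.card * J.card) := by
    refine (hK _ _).trans ?_
    gcongr
    · exact Finset.insert_subset (Finset.mem_union_right _ (Finset.mem_insert_self p I₂))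
        Finset.subset_union_left
    · exact Finset.insert_subset (Finset.mem_union_right _ (Finset.mem_insert_self p I₂))
        Finset.subset_union_left
    · exact Finset.filter_subset _ _
  have hsqrt : √(I₁.card * J₁.card) + √(I₂.card * J₂.card) ≤ √(I.card * J.card) := by
    have hcardI : (I₁.card : ℝ) + I₂.card ≤ I.card := by
      rw [Finset.card_union_of_disjoint hdisj, Finset.card_insert_of_notMem hp]
      push_cast
      linarith
    have hcardJ : (J₁.card : ℝ) + J₂.card = J.card := by
      rw [add_comm]
      simp only [J₁, J₂, ← not_le]
      exact_mod_cast Finset.card_filter_add_card_filter_not (s := J) (fun y => α p ≤ β y)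
    rw [← hcardJ]
    refine (sqrt_mul_add_sqrt_mul_le (by positivity) (by positivity) (by positivity)
      (by positivity)).trans ?_
    gcongr
  rw [sum_ite_le_eq_of_median K α β J hdisj hp h₁ h₂]
  refine (abs_add_three _ _ _).trans ?_
  linarith [hhalf I₁ hc₁ J₁, hhalf I₂ hc₂ J₂, mul_le_mul_of_nonneg_left hsqrt hE]

lemma RectBounded.ite_le {K : X → Y → ℝ} {δ C : ℝ} (hK : RectBounded K δ C) (hδ : 0 < δ)
    (hC : 0 ≤ C) (α : X → L) (β : Y → L) :
    RectBounded (fun x y => if α x ≤ β y then K x y else 0) δ (C * (1 - (1 / 2) ^ δ)⁻¹) := by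
  set θ : ℝ := (1 / 2) ^ δ
  have hθ : 0 < 1 - θ := sub_pos.2 (Real.rpow_lt_one (by norm_num) (by norm_num) hδ)
  intro I
  induction hn : I.card using Nat.strong_induction_on generalizing I with
  | _ n ih => ?_
  subst hn
  intro J
  rcases I.eq_empty_or_nonempty with rfl | hne
  · simp
  calc |∑ x ∈ I, ∑ y ∈ J, (if α x ≤ β y then K x y else 0)|
      ≤ (C * (1 - θ)⁻¹ * (θ * (I.card : ℝ) ^ δ) + C * (I.card : ℝ) ^ δ)
          * √(I.card * J.card) := by
        refine hK.abs_sum_ite_le_of_halves hδ.le hC (by positivity) α β hne (fun I' hc J' => ?_) J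
        refine (ih I'.card (by have := hne.card_pos; omega) I' rfl J').trans ?_
        rw [← Real.mul_rpow (by norm_num) (by positivity)]
        gcongr
        have : (2 * I'.card : ℝ) ≤ I.card := by exact_mod_cast hc
        linarith
    _ = C * (1 - θ)⁻¹ * (I.card : ℝ) ^ δ * √(I.card * J.card) := by
        field_simp
        ring

lemma RectBounded.ite_forall_le {K : X → Y → ℝ} {δ C : ℝ} (hK : RectBounded K δ C) (hδ : 0 < δ)
    (hC : 0 ≤ C) {Λ : Type*} (s : Finset Λ) (α : Λ → X → L) (β : Λ → Y → L) :
    RectBounded (fun x y => if ∀ l ∈ s, α l x ≤ β l y then K x y else 0) δ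
      (C * (1 - (1 / 2) ^ δ)⁻¹ ^ s.card) := by
  classical
  have hθ : 0 < 1 - (1 / 2 : ℝ) ^ δ :=
    sub_pos.2 (Real.rpow_lt_one (by norm_num) (by norm_num) hδ)
  induction s using Finset.induction_on with
  | empty => simpa using hK
  | insert l s hl ih =>
    rw [Finset.card_insert_of_notMem hl, pow_succ, ← mul_assoc]
    simp only [Finset.forall_mem_insert, ite_and]
    exact ih.ite_le hδ (by positivity) (α l) (β l)

end RectBounded

section Convolution

open scoped symmDiff

variable {ι : Type*} [DecidableEq ι] [Fintype ι]

lemma sum_walshTransform_indicator_sq (I : Finset (Finset ι)) :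
    ∑ S, walshTransform (fun x => if x ∈ I then 1 else 0) S ^ 2 =
      2 ^ Fintype.card ι * I.card := by
  simp only [sq, sum_walshTransform_mul, mul_ite, mul_one, mul_zero,
    Finset.sum_boole, Finset.filter_mem_eq_inter, Finset.univ_inter, ← ite_and, and_self]

lemma sum_walshTransform_mul_indicator (w : Finset ι → ℝ) (I J : Finset (Finset ι)) :
    ∑ S, walshTransform w S * walshTransform (fun x => if x ∈ I then 1 else 0) S
        * walshTransform (fun y => if y ∈ J then 1 else 0) S =
      2 ^ Fintype.card ι * ∑ x ∈ I, ∑ y ∈ J, w (x ∆ y) := by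
  have hcomm (S : Finset ι) :
      walshTransform w S * walshTransform (fun x => if x ∈ I then 1 else 0) S
        * walshTransform (fun y => if y ∈ J then 1 else 0) S =
      walshTransform (fun x => if x ∈ I then 1 else 0) S
        * walshTransform (fun x => ∑ y, w (x ∆ y) * if y ∈ J then 1 else 0) S := by
    rw [walshTransform_convolution]
    ring
  simp only [hcomm, sum_walshTransform_mul, ite_mul, one_mul, zero_mul, mul_ite, mul_one, mul_zero,
    Finset.sum_ite_mem, Finset.univ_inter]

lemma sum_sq_walshTransform_mul_indicator_le {w : Finset ι → ℝ} {κ : ℝ} (hκ : 0 ≤ κ)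
    (hw : ∀ S, walshTransform w S ^ 2 ≤ κ * ((1 / 3) ^ S.card + (1 / 3) ^ Sᶜ.card))
    (I : Finset (Finset ι)) :
    ∑ S, (walshTransform w S * walshTransform (fun x => if x ∈ I then 1 else 0) S) ^ 2 ≤
      2 * κ * √(2 ^ Fintype.card ι * (I.card : ℝ) ^ 3) := by
  set g := walshTransform fun x => if x ∈ I then (1 : ℝ) else 0
  have hbdd (x : Finset ι) : |if x ∈ I then (1 : ℝ) else 0| ≤ 1 := by split_ifs <;> norm_num
  have hsupp (x) (hx : x ∉ I) : (if x ∈ I then (1 : ℝ) else 0) = 0 := if_neg hx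
  calc ∑ S, (walshTransform w S * g S) ^ 2
      ≤ ∑ S : Finset ι, κ * ((1 / 3) ^ S.card + (1 / 3) ^ Sᶜ.card) * g S ^ 2 := by
        gcongr with S
        rw [mul_pow]
        exact mul_le_mul_of_nonneg_right (hw S) (sq_nonneg _)
    _ = κ * (∑ S, (1 / 3) ^ S.card * g S ^ 2 + ∑ S : Finset ι, (1 / 3) ^ Sᶜ.card * g S ^ 2) := by
        rw [← Finset.sum_add_distrib, Finset.mul_sum]
        exact Finset.sum_congr rfl fun S _ => by ring
    _ ≤ κ * (√(2 ^ Fintype.card ι * (I.card : ℝ) ^ 3)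
          + √(2 ^ Fintype.card ι * (I.card : ℝ) ^ 3)) := by
        gcongr
        · exact Real.le_sqrt_of_sq_le (sq_sum_low_level_weight_le hbdd hsupp)
        · exact Real.le_sqrt_of_sq_le (sq_sum_high_level_weight_le hbdd hsupp)
    _ = 2 * κ * √(2 ^ Fintype.card ι * (I.card : ℝ) ^ 3) := by ring

lemma rectBounded_convolution {w : Finset ι → ℝ} {κ : ℝ} (hκ : 0 ≤ κ)
    (hw : ∀ S, walshTransform w S ^ 2 ≤ κ * ((1 / 3) ^ S.card + (1 / 3) ^ Sᶜ.card)) :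
    RectBounded (fun x y => w (x ∆ y)) (1 / 4) √(2 * κ / √(2 ^ Fintype.card ι)) := by
  intro I J
  have ht : 0 < √(2 ^ Fintype.card ι : ℝ) := by positivity
  have htt : (2 : ℝ) ^ Fintype.card ι = √(2 ^ Fintype.card ι) ^ 2 :=
    (Real.sq_sqrt (by positivity)).symm
  generalize √(2 ^ Fintype.card ι : ℝ) = t at ht htt ⊢
  have hcauchy : (t ^ 2 * ∑ x ∈ I, ∑ y ∈ J, w (x ∆ y)) ^ 2 ≤
      2 * κ * √(t ^ 2 * (I.card : ℝ) ^ 3) * (t ^ 2 * J.card) := by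
    rw [← htt, ← sum_walshTransform_mul_indicator, ← sum_walshTransform_indicator_sq J]
    refine (Finset.sum_mul_sq_le_sq_mul_sq _ _ _).trans ?_
    gcongr
    exact sum_sq_walshTransform_mul_indicator_le hκ hw I
  have hquarter : ((I.card : ℝ) ^ (1 / 4 : ℝ)) ^ 2 = √I.card := by
    rw [← Real.rpow_natCast, ← Real.rpow_mul (by positivity), Real.sqrt_eq_rpow]
    norm_num
  have hcube : √(t ^ 2 * (I.card : ℝ) ^ 3) = t * (√I.card * I.card) := by
    rw [show t ^ 2 * (I.card : ℝ) ^ 3 = I.card * (t * I.card) ^ 2 by ring,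
      Real.sqrt_mul (by positivity), Real.sqrt_sq (by positivity)]
    ring
  rw [hcube] at hcauchy
  refine abs_le_of_sq_le_sq ?_ (by positivity)
  rw [mul_pow, mul_pow, Real.sq_sqrt (by positivity), Real.sq_sqrt (by positivity), hquarter,
    div_mul_eq_mul_div, div_mul_eq_mul_div, le_div_iff₀ ht]
  refine le_of_mul_le_mul_left (a := t ^ 3) ?_ (by positivity)
  linarith

end Convolution

section BinomialEstimates

lemma mul_centralBinom_le {j M : ℕ} (hj : 1 ≤ j) (hM : 2 * j ≤ M) :
    M * j.centralBinom ≤ 2 * j * M.choose j := by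
  induction M, hM using Nat.le_induction with
  | base => rw [Nat.centralBinom_eq_two_mul_choose]
  | succ M hM ih =>
    have hpascal : (M + 1).choose j * (M + 1 - j) = M.choose j * (M + 1) :=
      (Nat.choose_mul_succ_eq M j).symm
    have hgrow : M.choose j * (M + 1) ≤ (M + 1).choose j * M :=
      hpascal ▸ Nat.mul_le_mul_left _ (by omega)
    refine le_of_mul_le_mul_left ?_ (by omega : 0 < M)
    nlinarith [Nat.mul_le_mul_left (M + 1) ih, Nat.mul_le_mul_left (2 * j) hgrow]

lemma sq_mul_three_pow_le (j : ℕ) : j ^ 2 * 3 ^ j ≤ 7 * 4 ^ j := by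
  rcases lt_or_ge j 7 with hj | hj
  · interval_cases j <;> norm_num
  · induction j, hj using Nat.le_induction with
    | base => norm_num
    | succ j hj ih =>
      calc (j + 1) ^ 2 * 3 ^ (j + 1) = 3 * (j + 1) ^ 2 * 3 ^ j := by ring
        _ ≤ 4 * j ^ 2 * 3 ^ j := Nat.mul_le_mul_right _ (by nlinarith)
        _ = 4 * (j ^ 2 * 3 ^ j) := by ring
        _ ≤ 4 * (7 * 4 ^ j) := Nat.mul_le_mul_left 4 ih
        _ = 7 * 4 ^ (j + 1) := by ring

lemma mul_three_pow_le_choose {j M : ℕ} (hj : 1 ≤ j) (hM : 2 * j ≤ M) :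
    M * 3 ^ j ≤ 28 * M.choose j := by
  have hcentral : M * 4 ^ j ≤ 4 * j ^ 2 * M.choose j :=
    calc M * 4 ^ j ≤ M * (2 * j * j.centralBinom) :=
          Nat.mul_le_mul_left M (Nat.four_pow_le_two_mul_self_mul_centralBinom j hj)
      _ = 2 * j * (M * j.centralBinom) := by ring
      _ ≤ 2 * j * (2 * j * M.choose j) := Nat.mul_le_mul_left _ (mul_centralBinom_le hj hM)
      _ = 4 * j ^ 2 * M.choose j := by ring
  refine le_of_mul_le_mul_left ?_ (by positivity : 0 < j ^ 2)
  nlinarith [Nat.mul_le_mul_left M (sq_mul_three_pow_le j)]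

lemma inv_choose_sq_le {j k : ℕ} (hj : 1 ≤ j) (hk : 1 ≤ k) :
    (((j + k).choose j : ℝ)⁻¹) ^ 2 ≤
      (28 / ((j + k : ℕ) : ℝ)) ^ 2 * ((1 / 9) ^ j + (1 / 9) ^ k) := by
  wlog hle : j ≤ k generalizing j k
  · rw [add_comm j k, ← Nat.choose_symm_add, add_comm (_ ^ j)]
    exact this hk hj (by omega)
  have hchoose : ((j + k : ℕ) : ℝ) * 3 ^ j ≤ 28 * (j + k).choose j := by
    exact_mod_cast mul_three_pow_le_choose hj (by omega)
  have hpos : (0 : ℝ) < (j + k).choose j := by exact_mod_cast Nat.choose_pos (by omega)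
  have : (0 : ℝ) < (j + k : ℕ) := by exact_mod_cast (by omega : 0 < j + k)
  calc (((j + k).choose j : ℝ)⁻¹) ^ 2 ≤ (28 / ((j + k : ℕ) : ℝ) * (1 / 3) ^ j) ^ 2 := by
        gcongr
        rw [one_div, inv_pow, ← div_eq_mul_inv, div_div, inv_le_comm₀ hpos (by positivity),
          inv_div, div_le_iff₀ (by norm_num)]
        linarith
    _ = (28 / ((j + k : ℕ) : ℝ)) ^ 2 * (1 / 9) ^ j := by
        rw [mul_pow, ← pow_mul, mul_comm j, pow_mul]
        norm_num
    _ ≤ _ := by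
        gcongr
        exact le_add_of_nonneg_right (by positivity)

lemma choose_mul_choose_le_choose_add (m n i j : ℕ) :
    m.choose i * n.choose j ≤ (m + n).choose (i + j) := by
  rw [Nat.add_choose_eq]
  exact Finset.single_le_sum (f := fun ij : ℕ × ℕ => m.choose ij.1 * n.choose ij.2)
    (fun _ _ => Nat.zero_le _) (a := (i, j)) (Finset.HasAntidiagonal.mem_antidiagonal.2 rfl)

end BinomialEstimates

section Krawtchouk

open Polynomial

/-- The value at `s` of the Krawtchouk polynomial of degree `k` for the cube of dimension `N`. -/
noncomputable def krawtchouk (N k s : ℕ) : ℝ := ((1 - X) ^ s * (1 + X) ^ (N - s) : ℝ[X]).coeff k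

variable {ι : Type*} [DecidableEq ι] [Fintype ι]

lemma sum_powersetCard_walsh (S : Finset ι) (k : ℕ) :
    ∑ D ∈ Finset.powersetCard k Finset.univ, walsh S D =
      krawtchouk (Fintype.card ι) k S.card := by
  have hterm (D : Finset ι) : ∏ i ∈ D, C (cubeSign S i) * X = C (walsh S D) * X ^ D.card := by
    rw [Finset.prod_mul_distrib, Finset.prod_const, walsh_comm, walsh, map_prod]
  have hprod : ((1 - X) ^ S.card * (1 + X) ^ (Fintype.card ι - S.card) : ℝ[X]) =
      ∑ D : Finset ι, C (walsh S D) * X ^ D.card := by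
    simp only [← hterm]
    rw [← Finset.powerset_univ, ← Finset.prod_one_add, ← Finset.prod_mul_prod_compl S,
      ← Finset.card_compl]
    congr 1 <;> rw [← Finset.prod_const] <;> refine Finset.prod_congr rfl fun i hi => ?_
    · rw [cubeSign, if_pos hi, map_neg, map_one, neg_one_mul, sub_eq_add_neg]
    · rw [cubeSign, if_neg (Finset.mem_compl.1 hi), map_one, one_mul]
  rw [krawtchouk, hprod, finsetSum_coeff, Finset.powersetCard_eq_filter, Finset.sum_filter,
    Finset.powerset_univ]
  simp only [coeff_C_mul_X_pow, eq_comm]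

/-- Both sides count `∑ walsh S D` over the pairs with `|S| = s` and `|D| = k`. -/
lemma choose_mul_krawtchouk_comm (N k s : ℕ) :
    N.choose s * krawtchouk N k s = N.choose k * krawtchouk N s k := by
  have hcount (k s : ℕ) : N.choose s * krawtchouk N k s =
      ∑ S ∈ Finset.powersetCard s (Finset.univ : Finset (Fin N)),
        ∑ D ∈ Finset.powersetCard k Finset.univ, walsh S D := by
    simp only [sum_powersetCard_walsh, Fintype.card_fin]
    rw [Finset.sum_powersetCard _ _ (krawtchouk N k), nsmul_eq_mul, Finset.card_univ,
      Fintype.card_fin]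
  rw [hcount, hcount, Finset.sum_comm]
  simp only [walsh_comm]

lemma abs_coeff_one_sub_X_pow (n j : ℕ) : |((1 - X) ^ n : ℝ[X]).coeff j| = n.choose j := by
  have hneg : ((1 - X) ^ n : ℝ[X]) = C ((-1) ^ n) * (X + C (-1)) ^ n := by
    rw [C_pow, ← mul_pow]
    congr 1
    simp only [map_neg, map_one]
    ring
  rw [hneg, coeff_C_mul, coeff_X_add_C_pow, abs_mul, abs_mul, abs_pow, abs_pow, abs_neg, abs_one,
    one_pow, one_pow, one_mul, one_mul, Nat.abs_cast]

lemma one_sub_X_sq_pow_eq_expand (n : ℕ) : ((1 - X ^ 2) ^ n : ℝ[X]) = expand ℝ 2 ((1 - X) ^ n) := by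
  simp only [map_pow, map_sub, map_one, expand_X]

/-- The kernel on the cube of dimension `2 n + 2` comparing the pairs at distance `n + 2` with the
pairs at distance `n`: of a pair of signed sums of `2 n + 2` summands, the half-sum retains `n`,
respectively `n + 2`, summands. -/
noncomputable def twoStepKernel (n : ℕ) (D : Finset ι) : ℝ :=
  (if D.card = n + 2 then 1 else 0) - if D.card = n then 1 else 0

lemma walshTransform_twoStepKernel (n : ℕ) (S : Finset ι) :
    walshTransform (twoStepKernel n) S =
      krawtchouk (Fintype.card ι) (n + 2) S.card - krawtchouk (Fintype.card ι) n S.card := by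
  simp only [walshTransform, twoStepKernel, sub_mul, ite_mul, one_mul, zero_mul,
    Finset.sum_sub_distrib, ← sum_powersetCard_walsh, Finset.powersetCard_eq_filter,
    Finset.powerset_univ, Finset.sum_filter]

lemma choose_mul_krawtchouk_sub (n s : ℕ) :
    (2 * n + 2).choose s * (krawtchouk (2 * n + 2) (n + 2) s - krawtchouk (2 * n + 2) n s) =
      (2 * n + 2).choose n * (-4 * (X * (1 - X ^ 2) ^ n : ℝ[X]).coeff s) := by
  have hsymm : (2 * n + 2).choose (n + 2) = (2 * n + 2).choose n :=
    Nat.choose_symm_of_eq_add (by ring)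
  have hfactor : (((1 - X) ^ (n + 2) * (1 + X) ^ n - (1 - X) ^ n * (1 + X) ^ (n + 2)) : ℝ[X]) =
      C (-4) * (X * (1 - X ^ 2) ^ n) := by
    rw [show (1 - X ^ 2 : ℝ[X]) = (1 - X) * (1 + X) by ring, mul_pow,
      show (C (-4) : ℝ[X]) = -4 by rw [map_neg, map_ofNat]]
    ring
  rw [mul_sub, choose_mul_krawtchouk_comm _ (n + 2), choose_mul_krawtchouk_comm _ n, hsymm,
    ← mul_sub, krawtchouk, krawtchouk, ← coeff_sub, show 2 * n + 2 - (n + 2) = n by omega,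
    show 2 * n + 2 - n = n + 2 by omega, hfactor, coeff_C_mul]

lemma walshTransform_twoStepKernel_eq_zero {n : ℕ} (hι : Fintype.card ι = 2 * n + 2)
    {S : Finset ι} (hS : Even S.card) : walshTransform (twoStepKernel n) S = 0 := by
  have hpos : ((2 * n + 2).choose S.card : ℝ) ≠ 0 := by
    exact_mod_cast (Nat.choose_pos (hι ▸ S.card_le_univ)).ne'
  have hcoeff : (X * (1 - X ^ 2) ^ n : ℝ[X]).coeff S.card = 0 := by
    obtain ⟨j, hj⟩ := hS
    rw [hj]
    rcases j with _ | j
    · simp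
    · rw [show j + 1 + (j + 1) = 2 * j + 1 + 1 by ring, coeff_X_mul, one_sub_X_sq_pow_eq_expand,
        coeff_expand two_pos, if_neg (by omega)]
  rw [walshTransform_twoStepKernel, hι]
  refine (mul_eq_zero.1 ?_).resolve_left hpos
  rw [choose_mul_krawtchouk_sub, hcoeff, mul_zero, mul_zero]

lemma abs_walshTransform_twoStepKernel_le {n j : ℕ} (hι : Fintype.card ι = 2 * n + 2)
    {S : Finset ι} (hS : S.card = 2 * j + 1) :
    |walshTransform (twoStepKernel n) S| ≤
      4 * (2 * n + 2).choose n * ((n + 2).choose (j + 1) : ℝ)⁻¹ := by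
  have hjn : j ≤ n := by
    have := hι ▸ S.card_le_univ
    omega
  have hn : (0 : ℝ) < n.choose j := by exact_mod_cast Nat.choose_pos hjn
  have hn2 : (0 : ℝ) < (n + 2).choose (j + 1) := by exact_mod_cast Nat.choose_pos (by omega)
  have hvandermonde : (n.choose j : ℝ) * (n + 2).choose (j + 1) ≤ (2 * n + 2).choose S.card := by
    rw [hS]
    have := choose_mul_choose_le_choose_add n (n + 2) j (j + 1)
    rw [show n + (n + 2) = 2 * n + 2 by ring, show j + (j + 1) = 2 * j + 1 by ring] at this
    exact_mod_cast this
  have hcoeff : |(X * (1 - X ^ 2) ^ n : ℝ[X]).coeff S.card| = n.choose j := by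
    rw [hS, coeff_X_mul, one_sub_X_sq_pow_eq_expand, coeff_expand two_pos,
      if_pos (dvd_mul_right 2 j), Nat.mul_div_cancel_left j two_pos, abs_coeff_one_sub_X_pow]
  have hduality : (2 * n + 2).choose S.card * |walshTransform (twoStepKernel n) S| =
      4 * (2 * n + 2).choose n * n.choose j := by
    rw [walshTransform_twoStepKernel, hι, ← abs_of_nonneg (Nat.cast_nonneg (_ : ℕ) : (0 : ℝ) ≤ _),
      ← abs_mul, choose_mul_krawtchouk_sub, abs_mul, abs_mul, hcoeff, Nat.abs_cast]
    norm_num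
    ring
  rw [← div_eq_mul_inv, le_div_iff₀ hn2]
  refine le_of_mul_le_mul_left ?_ hn
  calc n.choose j * (|walshTransform (twoStepKernel n) S| * (n + 2).choose (j + 1))
      = (n.choose j * (n + 2).choose (j + 1)) * |walshTransform (twoStepKernel n) S| := by ring
    _ ≤ (2 * n + 2).choose S.card * |walshTransform (twoStepKernel n) S| := by gcongr
    _ = n.choose j * (4 * (2 * n + 2).choose n) := by rw [hduality]; ring

lemma walshTransform_twoStepKernel_sq_le {n : ℕ} (hι : Fintype.card ι = 2 * n + 2)
    (S : Finset ι) :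
    walshTransform (twoStepKernel n) S ^ 2 ≤
      (112 * (2 * n + 2).choose n / ((n + 2 : ℕ) : ℝ)) ^ 2
        * ((1 / 3) ^ S.card + (1 / 3) ^ Sᶜ.card) := by
  rcases Nat.even_or_odd' S.card with ⟨j, hj | hj⟩
  · rw [walshTransform_twoStepKernel_eq_zero hι ⟨j, by rw [hj]; ring⟩, zero_pow two_ne_zero]
    positivity
  have hcompl : Sᶜ.card = 2 * (n - j) + 1 ∧ j ≤ n := by
    have := hι ▸ S.card_le_univ
    rw [Finset.card_compl, hι]
    omega
  have hninth (i : ℕ) : (1 / 9 : ℝ) ^ (i + 1) ≤ (1 / 3) ^ (2 * i + 1) := by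
    rw [show (1 / 9 : ℝ) = (1 / 3) ^ 2 by norm_num, ← pow_mul]
    exact pow_le_pow_of_le_one (by norm_num) (by norm_num) (by omega)
  have hchoose := inv_choose_sq_le (j := j + 1) (k := n - j + 1) (by omega) (by omega)
  rw [show j + 1 + (n - j + 1) = n + 2 by omega] at hchoose
  calc walshTransform (twoStepKernel n) S ^ 2
      ≤ (4 * (2 * n + 2).choose n * ((n + 2).choose (j + 1) : ℝ)⁻¹) ^ 2 :=
        sq_le_sq' (neg_le_of_abs_le (abs_walshTransform_twoStepKernel_le hι hj))
          (le_of_abs_le (abs_walshTransform_twoStepKernel_le hι hj))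
    _ = (4 * (2 * n + 2).choose n) ^ 2 * (((n + 2).choose (j + 1) : ℝ)⁻¹) ^ 2 := mul_pow _ _ _
    _ ≤ (4 * (2 * n + 2).choose n) ^ 2 *
          ((28 / ((n + 2 : ℕ) : ℝ)) ^ 2 * ((1 / 3) ^ S.card + (1 / 3) ^ Sᶜ.card)) := by
        rw [hj, hcompl.1]
        refine mul_le_mul_of_nonneg_left (hchoose.trans ?_) (sq_nonneg _)
        gcongr <;> exact hninth _
    _ = _ := by ring

end Krawtchouk

section TwoStep

open scoped symmDiff

variable {ι : Type*} [DecidableEq ι] [Fintype ι]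

lemma sum_sum_symmDiff (g : Finset ι → ℝ) :
    ∑ x, ∑ y, g (x ∆ y) = 2 ^ Fintype.card ι * ∑ D, g D := by
  have hshift (x : Finset ι) : ∑ y, g (x ∆ y) = ∑ D, g D :=
    Equiv.sum_comp (symmDiff_right_involutive x).toPerm g
  simp only [hshift, Finset.sum_const, Finset.card_univ, Fintype.card_finset, nsmul_eq_mul,
    Nat.cast_pow, Nat.cast_ofNat]

lemma sum_twoStepKernel_mul_card_compl {n : ℕ} (hι : Fintype.card ι = 2 * n + 2) (f : ℕ → ℝ) :
    ∑ D : Finset ι, twoStepKernel n D * f Dᶜ.card =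
      (2 * n + 2).choose n * (f n - f (n + 2)) := by
  have hlevel (j k : ℕ) (hjk : j + k = 2 * n + 2) :
      ∑ D : Finset ι, (if D.card = j then 1 else 0) * f Dᶜ.card =
        (2 * n + 2).choose j * f k := by
    have hcard (D : Finset ι) : (if D.card = j then 1 else 0) * f Dᶜ.card =
        if D.card = j then f k else 0 := by
      split_ifs with hD
      · rw [one_mul, Finset.card_compl, hι, hD, ← hjk, Nat.add_sub_cancel_left]
      · exact zero_mul _
    rw [Finset.sum_congr rfl fun D _ => hcard D, ← Finset.sum_filter, Finset.sum_const,
      ← Finset.powerset_univ, ← Finset.powersetCard_eq_filter, Finset.card_powersetCard,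
      Finset.card_univ, hι, nsmul_eq_mul]
  simp only [twoStepKernel, sub_mul, Finset.sum_sub_distrib]
  rw [hlevel (n + 2) n (by ring), hlevel n (n + 2) (by ring),
    Nat.choose_symm_of_eq_add (show 2 * n + 2 = n + 2 + n by ring)]
  ring

lemma abs_sum_twoStepKernel_ite_le {n : ℕ} (hι : Fintype.card ι = 2 * n + 2) {Λ L : Type*}
    [LinearOrder L] (s : Finset Λ) (α β : Λ → Finset ι → L) :
    |∑ x, ∑ y, if ∀ l ∈ s, α l x ≤ β l y then twoStepKernel n (x ∆ y) else 0| ≤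
      160 / (n + 2) * (1 - (1 / 2) ^ (1 / 4 : ℝ))⁻¹ ^ s.card *
        (2 ^ (2 * n + 2) * (2 * n + 2).choose n) := by
  have hbdd := (rectBounded_convolution (sq_nonneg _)
    (walshTransform_twoStepKernel_sq_le hι)).ite_forall_le (by norm_num) (by positivity) s α β
    Finset.univ Finset.univ
  rw [Finset.card_univ, Fintype.card_finset, hι] at hbdd
  push_cast at hbdd
  rw [Real.sqrt_mul_self (by positivity)] at hbdd
  set T : ℝ := 2 ^ (2 * n + 2)
  have hT : 0 < T := by positivity
  have hconst : √(2 * (112 * (2 * n + 2).choose n / (n + 2)) ^ 2 / √T) * T ^ (1 / 4 : ℝ) ≤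
      160 * (2 * n + 2).choose n / (n + 2) := by
    have hquarter : (T ^ (1 / 4 : ℝ)) ^ 2 = √T := by
      rw [← Real.rpow_natCast, ← Real.rpow_mul hT.le, Real.sqrt_eq_rpow]
      norm_num
    refine le_of_sq_le_sq ?_ (by positivity)
    rw [mul_pow, Real.sq_sqrt (by positivity), hquarter,
      div_mul_cancel₀ _ (Real.sqrt_pos.2 hT).ne', div_pow, div_pow, mul_div_assoc']
    gcongr
    nlinarith [sq_nonneg ((2 * n + 2).choose n : ℝ)]
  have hpos : 0 ≤ (1 - (1 / 2 : ℝ) ^ (1 / 4 : ℝ))⁻¹ :=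
    inv_nonneg.2 (sub_nonneg.2 (Real.rpow_le_one (by norm_num) (by norm_num) (by norm_num)))
  refine hbdd.trans ?_
  rw [mul_right_comm _ _ (T ^ (1 / 4 : ℝ))]
  calc √(2 * (112 * (2 * n + 2).choose n / (n + 2)) ^ 2 / √T) * T ^ (1 / 4 : ℝ)
        * (1 - (1 / 2) ^ (1 / 4 : ℝ))⁻¹ ^ s.card * T
      ≤ 160 * (2 * n + 2).choose n / (n + 2) * (1 - (1 / 2) ^ (1 / 4 : ℝ))⁻¹ ^ s.card * T := by
        gcongr
    _ = 160 / (n + 2) * (1 - (1 / 2) ^ (1 / 4 : ℝ))⁻¹ ^ s.card *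
        (T * (2 * n + 2).choose n) := by ring

end TwoStep

section SignedSum

open scoped symmDiff

variable {ι E : Type*} [DecidableEq ι] [AddCommGroup E]

/-- The sum over `U` of the `y i`, with the sign of `y i` flipped when `i ∈ x`. -/
def signedSum (x U : Finset ι) (y : ι → E) : E := ∑ i ∈ U, if i ∈ x then -y i else y i

lemma map_signedSum {E' : Type*} [AddCommGroup E'] (φ : E →+ E') (x U : Finset ι) (y : ι → E) :
    φ (signedSum x U y) = signedSum x U fun i => φ (y i) := by
  simp only [signedSum, map_sum, apply_ite φ, map_neg]

lemma signedSum_eq_sum_cubeSign_mul (x U : Finset ι) (a : ι → ℝ) :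
    signedSum x U a = ∑ i ∈ U, cubeSign x i * a i := by
  simp only [signedSum, cubeSign, ite_mul, neg_one_mul, one_mul]

lemma signedSum_univ_add_signedSum_univ [Fintype ι] (x x' : Finset ι) (y : ι → E) :
    signedSum x Finset.univ y + signedSum x' Finset.univ y = 2 • signedSum x (x ∆ x')ᶜ y := by
  simp only [signedSum, ← Finset.sum_add_distrib, Finset.smul_sum]
  rw [← Finset.sum_subset (Finset.subset_univ (x ∆ x')ᶜ)]
  · refine Finset.sum_congr rfl fun i hi => ?_
    by_cases hx : i ∈ x <;> by_cases hx' : i ∈ x' <;>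
      simp_all [two_nsmul]
  · intro i _ hi
    by_cases hx : i ∈ x <;> by_cases hx' : i ∈ x' <;>
      simp_all

variable [MeasurableSpace E] [MeasurableAdd₂ E] [MeasurableNeg E]

lemma measurable_signedSum (x U : Finset ι) : Measurable (signedSum (E := E) x U) :=
  Finset.measurable_sum U fun i _ => by split_ifs <;> fun_prop

variable (F : Measure E) [IsProbabilityMeasure F] [F.IsNegInvariant]

lemma map_signedSum_pi [Fintype ι] (x U : Finset ι) :
    (Measure.pi fun _ : ι => F).map (signedSum x U) = convPow F U.card := by
  have hmeas (i : ι) : Measurable fun v : E => if i ∈ x then -v else v := by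
    split_ifs <;> fun_prop
  have hmeas_eval (i : ι) : Measurable fun y : ι → E => if i ∈ x then -y i else y i :=
    (hmeas i).comp (measurable_pi_apply i)
  have hindep :=
    ProbabilityTheory.iIndepFun_pi (μ := fun _ : ι => F) fun i => (hmeas i).aemeasurable
  have hfactor (i : ι) :
      (Measure.pi fun _ : ι => F).map (fun y => if i ∈ x then -y i else y i) = F := by
    have hsign : MeasurePreserving (fun v : E => if i ∈ x then -v else v) F F := by
      split_ifs
      exacts [Measure.measurePreserving_neg F, MeasurePreserving.id F]
    exact (hsign.comp (measurePreserving_eval (fun _ : ι => F) i)).map_eq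
  induction U using Finset.induction_on with
  | empty =>
    have hempty : signedSum (E := E) x ∅ = fun _ => 0 := rfl
    rw [hempty, Measure.map_const, measure_univ, one_smul]
    rfl
  | insert b s hb ih =>
    have hsum : (∑ i ∈ s, fun y : ι → E => if i ∈ x then -y i else y i) = signedSum x s := by
      ext1 y
      rw [Finset.sum_apply, signedSum]
    have hind := hindep.indepFun_finsetSum_of_notMem hmeas_eval hb
    rw [hsum] at hind
    have hconv := hind.map_add_eq_map_conv_map (measurable_signedSum x s) (hmeas_eval b)
    have hinsert : signedSum x (insert b s) =
        signedSum x s + fun y : ι → E => if b ∈ x then -y b else y b := by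
      ext1 y
      rw [signedSum, Finset.sum_insert hb, add_comm, Pi.add_apply, signedSum]
    rw [hinsert, hconv, ih, hfactor, Finset.card_insert_of_notMem hb]
    rfl

lemma abs_sum_mul_convPow_le_of_forall [Finite ι] {A : Type*} (s : Finset A) (w : A → ℝ)
    (x U : A → Finset ι) {P : Set E} (hP : MeasurableSet P) {B : ℝ}
    (h : ∀ y : ι → E, |∑ a ∈ s, w a * P.indicator 1 (signedSum (x a) (U a) y)| ≤ B) :
    |∑ a ∈ s, w a * (convPow F (U a).card).real P| ≤ B := by
  have := Fintype.ofFinite ι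
  have hreal (a : A) : (convPow F (U a).card).real P =
      ∫ y, P.indicator 1 (signedSum (x a) (U a) y) ∂(Measure.pi fun _ : ι => F) := by
    rw [← map_signedSum_pi F (x a) (U a), ← integral_indicator_one hP, integral_map
      (measurable_signedSum _ _).aemeasurable (measurable_one.indicator hP).aestronglyMeasurable]
  have hint (a : A) : Integrable (fun y => w a * P.indicator 1 (signedSum (x a) (U a) y))
      (Measure.pi fun _ : ι => F) :=
    (((integrable_const 1).indicator hP).comp_measurable (measurable_signedSum _ _)).const_mul _
  simp only [hreal, ← integral_const_mul]
  rw [← integral_finsetSum _ fun a _ => hint a, ← Real.norm_eq_abs]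
  refine (norm_integral_le_of_norm_le_const (.of_forall fun y => h y)).trans_eq ?_
  rw [probReal_univ, mul_one]

end SignedSum

section TwoStepMeasure

open scoped symmDiff

variable {E Λ : Type*} [AddCommGroup E]

/-- The intersection of the half-spaces `φ l ≤ c l`. -/
def polytope (φ : Λ → E →+ ℝ) (c : Λ → ℝ) : Set E := {v | ∀ l, φ l v ≤ c l}

variable {ι : Type*} [DecidableEq ι] [Fintype ι]

lemma signedSum_compl_symmDiff_mem_polytope_iff (φ : Λ → E →+ ℝ) (c : Λ → ℝ) (x x' : Finset ι)
    (y : ι → E) :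
    signedSum x (x ∆ x')ᶜ y ∈ polytope φ c ↔ ∀ l, φ l (signedSum x Finset.univ y) ≤
      2 * c l - φ l (signedSum x' Finset.univ y) := by
  refine forall_congr' fun l => ?_
  have h := congrArg (φ l) (signedSum_univ_add_signedSum_univ x x' y)
  rw [map_add, map_nsmul, nsmul_eq_mul, Nat.cast_ofNat] at h
  constructor <;> intro <;> linarith

lemma abs_sum_twoStepKernel_mul_indicator_le [Fintype Λ] {n : ℕ} (hι : Fintype.card ι = 2 * n + 2)
    (φ : Λ → E →+ ℝ) (c : Λ → ℝ) (y : ι → E) :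
    |∑ a : Finset ι × Finset ι, twoStepKernel n (a.1 ∆ a.2) *
        (polytope φ c).indicator 1 (signedSum a.1 (a.1 ∆ a.2)ᶜ y)| ≤
      160 / (n + 2) * (1 - (1 / 2) ^ (1 / 4 : ℝ))⁻¹ ^ Fintype.card Λ *
        (2 ^ (2 * n + 2) * (2 * n + 2).choose n) := by
  classical
  simp only [Fintype.sum_prod_type]
  refine (congrArg abs ?_).trans_le (abs_sum_twoStepKernel_ite_le hι Finset.univ
    (fun l x => φ l (signedSum x Finset.univ y))
    (fun l x => 2 * c l - φ l (signedSum x Finset.univ y)))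
  refine Finset.sum_congr rfl fun x _ => Finset.sum_congr rfl fun x' _ => ?_
  rw [Set.indicator_apply, Pi.one_apply, mul_ite, mul_one, mul_zero]
  have hmem := signedSum_compl_symmDiff_mem_polytope_iff φ c x x' y
  by_cases h : signedSum x (x ∆ x')ᶜ y ∈ polytope φ c
  · rw [if_pos h, if_pos fun l _ => hmem.1 h l]
  · rw [if_neg h, if_neg fun hle => h (hmem.2 fun l => hle l (Finset.mem_univ l))]

variable [MeasurableSpace E]

lemma measurableSet_polytope [Countable Λ] {φ : Λ → E →+ ℝ} (hφ : ∀ l, Measurable (φ l))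
    (c : Λ → ℝ) : MeasurableSet (polytope φ c) :=
  .congr (.iInter fun l => measurableSet_le (hφ l) measurable_const) (Set.ofPred_forall _).symm

lemma sum_twoStepKernel_mul_convPow {n : ℕ} (hι : Fintype.card ι = 2 * n + 2) (F : Measure E)
    (P : Set E) :
    ∑ a : Finset ι × Finset ι, twoStepKernel n (a.1 ∆ a.2) *
        (convPow F (a.1 ∆ a.2)ᶜ.card).real P =
      2 ^ (2 * n + 2) * (2 * n + 2).choose n *
        ((convPow F n).real P - (convPow F (n + 2)).real P) := by
  rw [Fintype.sum_prod_type, sum_sum_symmDiff fun D : Finset ι =>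
      twoStepKernel n D * (convPow F Dᶜ.card).real P,
    sum_twoStepKernel_mul_card_compl hι fun k => (convPow F k).real P, hι, mul_assoc]

lemma abs_convPow_polytope_sub_add_two_le [Fintype Λ] [MeasurableAdd₂ E] [MeasurableNeg E]
    (F : Measure E) [IsProbabilityMeasure F] [F.IsNegInvariant] {φ : Λ → E →+ ℝ}
    (hφ : ∀ l, Measurable (φ l)) (c : Λ → ℝ) (n : ℕ) :
    |(convPow F n).real (polytope φ c) - (convPow F (n + 2)).real (polytope φ c)| ≤
      160 / (n + 2) * (1 - (1 / 2) ^ (1 / 4 : ℝ))⁻¹ ^ Fintype.card Λ := by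
  have hι : Fintype.card (Fin (2 * n + 2)) = 2 * n + 2 := Fintype.card_fin _
  have htotal := abs_sum_mul_convPow_le_of_forall F Finset.univ
    (fun a : Finset (Fin (2 * n + 2)) × Finset (Fin (2 * n + 2)) => twoStepKernel n (a.1 ∆ a.2))
    (fun a => a.1) (fun a => (a.1 ∆ a.2)ᶜ) (measurableSet_polytope hφ c)
    (abs_sum_twoStepKernel_mul_indicator_le hι φ c)
  rw [sum_twoStepKernel_mul_convPow hι, abs_mul, abs_of_nonneg (by positivity), mul_comm] at htotal
  have hchoose : 0 < (2 * n + 2).choose n := Nat.choose_pos (by omega)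
  exact le_of_mul_le_mul_right htotal (by positivity)

end TwoStepMeasure

section OneStep

open scoped symmDiff

variable {ι : Type*} [DecidableEq ι] [Fintype ι]

lemma sum_cubeSign_mul_cubeSign (i j : ι) :
    ∑ x, cubeSign x i * cubeSign x j = if i = j then 2 ^ Fintype.card ι else 0 := by
  have hwalsh (x : Finset ι) : cubeSign x i * cubeSign x j = walsh x ({i} ∆ {j}) := by
    rw [walsh_comm, walsh_comm, walsh_symmDiff, walsh_comm x, walsh_comm x, walsh, walsh,
      Finset.prod_singleton, Finset.prod_singleton]
  simp only [hwalsh, sum_walsh, ← Finset.bot_eq_empty, symmDiff_eq_bot, Finset.singleton_inj]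

lemma sum_abs_sum_mul_cubeSign_le (ε : ι → ℝ) :
    ∑ x, |∑ i, ε i * cubeSign x i| ≤ 2 ^ Fintype.card ι * √(∑ i, ε i ^ 2) := by
  have hparseval : ∑ x, (∑ i, ε i * cubeSign x i) ^ 2 = 2 ^ Fintype.card ι * ∑ i, ε i ^ 2 := by
    calc ∑ x, (∑ i, ε i * cubeSign x i) ^ 2
        = ∑ i, ∑ j, ε i * ε j * ∑ x, cubeSign x i * cubeSign x j := by
          simp only [sq, Finset.sum_mul_sum]
          rw [Finset.sum_comm]
          refine Finset.sum_congr rfl fun i _ => ?_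
          rw [Finset.sum_comm]
          simp only [mul_mul_mul_comm, Finset.mul_sum]
      _ = 2 ^ Fintype.card ι * ∑ i, ε i ^ 2 := by
          simp only [sum_cubeSign_mul_cubeSign, mul_ite, mul_zero, Finset.sum_ite_eq,
            Finset.mem_univ, if_true, Finset.mul_sum]
          exact Finset.sum_congr rfl fun i _ => by ring
  have hcauchy := sq_sum_le_card_mul_sum_sq (s := Finset.univ)
    (f := fun x => |∑ i, ε i * cubeSign x i|)
  simp only [sq_abs, hparseval, Finset.card_univ, Fintype.card_finset] at hcauchy
  refine le_of_sq_le_sq ?_ (by positivity)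
  rw [mul_pow, Real.sq_sqrt (Finset.sum_nonneg fun i _ => sq_nonneg _)]
  refine hcauchy.trans_eq ?_
  push_cast
  ring

lemma abs_sub_sub_le_sign_mul_of_antitone {f : ℝ → ℝ} (hf : Antitone f) (u b : ℝ) :
    |f u - f (u - b)| ≤ SignType.sign b * (f (u - 2 * b) - f u) := by
  rcases lt_trichotomy b 0 with hb | rfl | hb
  · rw [abs_of_nonneg (sub_nonneg.2 (hf (by linarith))), sign_neg hb, SignType.coe_neg_one]
    linarith [hf (show u - b ≤ u - 2 * b by linarith)]
  · simp
  · rw [abs_of_nonpos (sub_nonpos.2 (hf (by linarith))), sign_pos hb, SignType.coe_one]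
    linarith [hf (show u - 2 * b ≤ u - b by linarith)]

lemma signedSum_univ_erase (x : Finset ι) (i : ι) (a : ι → ℝ) :
    signedSum x (Finset.univ.erase i) a = signedSum x Finset.univ a - cubeSign x i * a i := by
  simp only [signedSum_eq_sum_cubeSign_mul, Finset.sum_erase_eq_sub (Finset.mem_univ i)]

lemma signedSum_symmDiff_singleton (x : Finset ι) (i : ι) (a : ι → ℝ) :
    signedSum (x ∆ {i}) Finset.univ a = signedSum x Finset.univ a - 2 * (cubeSign x i * a i) := by
  have herase : signedSum (x ∆ {i}) (Finset.univ.erase i) a =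
      signedSum x (Finset.univ.erase i) a := by
    simp only [signedSum_eq_sum_cubeSign_mul, cubeSign_symmDiff]
    refine Finset.sum_congr rfl fun j hj => ?_
    rw [cubeSign, cubeSign, if_neg (c := j ∈ ({i} : Finset ι)), mul_one]
    exact Finset.mem_singleton.not.2 (Finset.ne_of_mem_erase hj)
  rw [signedSum_univ_erase, signedSum_univ_erase, cubeSign_symmDiff_singleton_self] at herase
  linarith

lemma sum_abs_sub_signedSum_erase_le {f : ℝ → ℝ} (hf : Antitone f) (a : ι → ℝ) (i : ι) :
    ∑ x, |f (signedSum x Finset.univ a) - f (signedSum x (Finset.univ.erase i) a)| ≤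
      -2 * ∑ x, SignType.sign (a i) * cubeSign x i * f (signedSum x Finset.univ a) := by
  have hsign (x : Finset ι) : (SignType.sign (cubeSign x i * a i) : ℝ) =
      SignType.sign (a i) * cubeSign x i := by
    unfold cubeSign
    split_ifs <;> simp [Left.sign_neg]
  have hflip : ∑ x, SignType.sign (a i) * cubeSign x i * f (signedSum (x ∆ {i}) Finset.univ a) =
      -∑ x, SignType.sign (a i) * cubeSign x i * f (signedSum x Finset.univ a) := by
    rw [← Equiv.sum_comp (symmDiff_left_involutive {i}).toPerm, ← Finset.sum_neg_distrib]
    refine Finset.sum_congr rfl fun x _ => ?_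
    rw [Function.Involutive.coe_toPerm, symmDiff_symmDiff_cancel_right,
      cubeSign_symmDiff_singleton_self]
    ring
  calc ∑ x, |f (signedSum x Finset.univ a) - f (signedSum x (Finset.univ.erase i) a)|
      ≤ ∑ x, SignType.sign (a i) * cubeSign x i *
          (f (signedSum (x ∆ {i}) Finset.univ a) - f (signedSum x Finset.univ a)) := by
        gcongr with x
        rw [signedSum_univ_erase, signedSum_symmDiff_singleton, ← hsign]
        exact abs_sub_sub_le_sign_mul_of_antitone hf _ _
    _ = -2 * ∑ x, SignType.sign (a i) * cubeSign x i * f (signedSum x Finset.univ a) := by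
        simp only [mul_sub, Finset.sum_sub_distrib, hflip]
        ring

lemma sum_sum_abs_sub_signedSum_erase_le {f : ℝ → ℝ} (hf : Antitone f) (hf1 : ∀ u, |f u| ≤ 1)
    (a : ι → ℝ) :
    ∑ i, ∑ x, |f (signedSum x Finset.univ a) - f (signedSum x (Finset.univ.erase i) a)| ≤
      2 * (2 ^ Fintype.card ι * √(Fintype.card ι)) := by
  have hsq : ∑ i, (SignType.sign (a i) : ℝ) ^ 2 ≤ Fintype.card ι := by
    refine (Finset.sum_le_card_nsmul _ _ 1 fun i _ => ?_).trans_eq (by simp)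
    rcases SignType.sign (a i) <;> simp
  calc ∑ i, ∑ x, |f (signedSum x Finset.univ a) - f (signedSum x (Finset.univ.erase i) a)|
      ≤ ∑ i, -2 * ∑ x, SignType.sign (a i) * cubeSign x i * f (signedSum x Finset.univ a) :=
        Finset.sum_le_sum fun i _ => sum_abs_sub_signedSum_erase_le hf a i
    _ = 2 * ∑ x, -(∑ i, SignType.sign (a i) * cubeSign x i) * f (signedSum x Finset.univ a) := by
        rw [← Finset.mul_sum, Finset.sum_comm]
        simp only [Finset.sum_mul, neg_mul, Finset.sum_neg_distrib]
        ring
    _ ≤ 2 * ∑ x, |∑ i, SignType.sign (a i) * cubeSign x i| := by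
        gcongr with x
        refine (le_abs_self _).trans ?_
        rw [abs_mul, abs_neg]
        exact mul_le_of_le_one_right (abs_nonneg _) (hf1 _)
    _ ≤ 2 * (2 ^ Fintype.card ι * √(Fintype.card ι)) := by
        gcongr
        exact (sum_abs_sum_mul_cubeSign_le _).trans (by gcongr)

end OneStep

section OneStepMeasure

variable {E Λ : Type*} [AddCommGroup E] [Fintype Λ]

lemma antitone_indicator_Iic (c : ℝ) : Antitone ((Set.Iic c).indicator (1 : ℝ → ℝ)) := by
  intro u v huv
  by_cases hv : v ∈ Set.Iic c
  · rw [Set.indicator_of_mem hv, Set.indicator_of_mem (Set.mem_Iic.2 (huv.trans hv))]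
    rfl
  · rw [Set.indicator_of_notMem hv]
    exact Set.indicator_nonneg (fun _ _ => zero_le_one) u

lemma abs_indicator_polytope_sub_le (φ : Λ → E →+ ℝ) (c : Λ → ℝ) (u v : E) :
    |(polytope φ c).indicator (1 : E → ℝ) u - (polytope φ c).indicator 1 v| ≤
      ∑ l, |(Set.Iic (c l)).indicator 1 (φ l u) - (Set.Iic (c l)).indicator 1 (φ l v)| := by
  wlog huv : u ∈ polytope φ c ∧ v ∉ polytope φ c generalizing u v
  · by_cases hvu : v ∈ polytope φ c ∧ u ∉ polytope φ c
    · simpa only [abs_sub_comm] using this v u hvu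
    · have heq : (polytope φ c).indicator (1 : E → ℝ) u = (polytope φ c).indicator 1 v := by
        by_cases hu : u ∈ polytope φ c
        · have hv : v ∈ polytope φ c := by tauto
          rw [Set.indicator_of_mem hu, Set.indicator_of_mem hv, Pi.one_apply, Pi.one_apply]
        · have hv : v ∉ polytope φ c := by tauto
          rw [Set.indicator_of_notMem hu, Set.indicator_of_notMem hv]
      rw [heq, sub_self, abs_zero]
      exact Finset.sum_nonneg fun l _ => abs_nonneg _
  obtain ⟨hu, hv⟩ := huv
  obtain ⟨l, hl⟩ := not_forall.1 hv
  rw [Set.indicator_of_mem hu, Set.indicator_of_notMem hv]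
  refine le_trans ?_ (Finset.single_le_sum (fun l _ => abs_nonneg _) (Finset.mem_univ l))
  rw [Set.indicator_of_mem (Set.mem_Iic.2 (hu l)), Set.indicator_of_notMem (mt Set.mem_Iic.1 hl)]
  rfl

lemma abs_sum_indicator_polytope_sub_erase_le {ι : Type*} [DecidableEq ι] [Fintype ι]
    (φ : Λ → E →+ ℝ) (c : Λ → ℝ) (y : ι → E) :
    |∑ p : ι × Finset ι, ((polytope φ c).indicator (1 : E → ℝ) (signedSum p.2 Finset.univ y) -
        (polytope φ c).indicator 1 (signedSum p.2 (Finset.univ.erase p.1) y))| ≤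
      Fintype.card Λ * (2 * (2 ^ Fintype.card ι * √(Fintype.card ι))) := by
  have hbdd (t u : ℝ) : |(Set.Iic t).indicator 1 u| ≤ (1 : ℝ) := by
    by_cases hu : u ∈ Set.Iic t <;> simp [hu]
  calc |∑ p : ι × Finset ι, ((polytope φ c).indicator (1 : E → ℝ) (signedSum p.2 Finset.univ y) -
        (polytope φ c).indicator 1 (signedSum p.2 (Finset.univ.erase p.1) y))|
      ≤ ∑ p : ι × Finset ι, ∑ l,
          |(Set.Iic (c l)).indicator 1 (φ l (signedSum p.2 Finset.univ y)) -
            (Set.Iic (c l)).indicator 1 (φ l (signedSum p.2 (Finset.univ.erase p.1) y))| :=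
        (Finset.abs_sum_le_sum_abs _ _).trans
          (Finset.sum_le_sum fun p _ => abs_indicator_polytope_sub_le φ c _ _)
    _ ≤ ∑ _l : Λ, 2 * (2 ^ Fintype.card ι * √(Fintype.card ι)) := by
        rw [Finset.sum_comm]
        gcongr with l
        simp only [Fintype.sum_prod_type, map_signedSum]
        exact sum_sum_abs_sub_signedSum_erase_le (antitone_indicator_Iic _) (hbdd _) _
    _ = Fintype.card Λ * (2 * (2 ^ Fintype.card ι * √(Fintype.card ι))) := by
        rw [Finset.sum_const, Finset.card_univ, nsmul_eq_mul]

lemma abs_convPow_polytope_sub_succ_le [MeasurableSpace E] [MeasurableAdd₂ E] [MeasurableNeg E]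
    (F : Measure E) [IsProbabilityMeasure F] [F.IsNegInvariant] {φ : Λ → E →+ ℝ}
    (hφ : ∀ l, Measurable (φ l)) (c : Λ → ℝ) (n : ℕ) :
    |(convPow F n).real (polytope φ c) - (convPow F (n + 1)).real (polytope φ c)| ≤
      2 * Fintype.card Λ / √(n + 1) := by
  have htotal := abs_sum_mul_convPow_le_of_forall F Finset.univ
    (fun a : Bool × Fin (n + 1) × Finset (Fin (n + 1)) => bif a.1 then (1 : ℝ) else -1)
    (fun a => a.2.2) (fun a => bif a.1 then Finset.univ else Finset.univ.erase a.2.1)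
    (measurableSet_polytope hφ c) (B := Fintype.card Λ * (2 * (2 ^ (n + 1) * √(n + 1)))) fun y => by
      simpa [Fintype.sum_prod_type, ← sub_eq_add_neg] using
        abs_sum_indicator_polytope_sub_erase_le φ c y
  have hcard (i : Fin (n + 1)) : (Finset.univ.erase i).card = n := by
    rw [Finset.card_erase_of_mem (Finset.mem_univ i), Finset.card_fin, Nat.add_sub_cancel]
  have hscaled : √(n + 1) ^ 2 * 2 ^ (n + 1) *
      |(convPow F n).real (polytope φ c) - (convPow F (n + 1)).real (polytope φ c)| ≤
      Fintype.card Λ * (2 * (2 ^ (n + 1) * √(n + 1))) := by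
    rw [Real.sq_sqrt (by positivity), abs_sub_comm,
      ← abs_of_nonneg (by positivity : (0 : ℝ) ≤ (n + 1) * 2 ^ (n + 1)), ← abs_mul, mul_sub,
      sub_eq_add_neg]
    simpa [Fintype.sum_prod_type, hcard, mul_assoc] using htotal
  rw [le_div_iff₀ (by positivity)]
  refine le_of_mul_le_mul_left (a := √(n + 1) * 2 ^ (n + 1)) ?_ (by positivity)
  linarith

end OneStepMeasure

section Polyhedra

variable {E : Type*} [AddCommGroup E] [MeasurableSpace E]

lemma abs_convPow_polytope_sub_add_le [MeasurableAdd₂ E] [MeasurableNeg E] (F : Measure E)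
    [IsProbabilityMeasure F] [F.IsNegInvariant] {Λ : Type*} [Fintype Λ] {φ : Λ → E →+ ℝ}
    (hφ : ∀ l, Measurable (φ l)) (c : Λ → ℝ) {n k : ℕ} (hn : 0 < n) (hk : (k : ℝ) ≤ √n) :
    |(convPow F n).real (polytope φ c) - (convPow F (n + k)).real (polytope φ c)| ≤
      (160 * (1 - (1 / 2) ^ (1 / 4 : ℝ))⁻¹ ^ Fintype.card Λ + 2 * Fintype.card Λ) / √n := by
  set μ : ℕ → ℝ := fun N => (convPow F N).real (polytope φ c)
  set A : ℝ := (1 - (1 / 2) ^ (1 / 4 : ℝ))⁻¹ ^ Fintype.card Λ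
  have hA : 0 ≤ A := pow_nonneg (inv_nonneg.2 (sub_nonneg.2
    (Real.rpow_le_one (by norm_num) (by norm_num) (by norm_num)))) _
  have hs : 0 < √(n : ℝ) := Real.sqrt_pos.2 (Nat.cast_pos.2 hn)
  have hss : √(n : ℝ) * √n = n := Real.mul_self_sqrt n.cast_nonneg
  have htwo (j : ℕ) (hj : (j : ℝ) ≤ √n) : |μ n - μ (n + 2 * j)| ≤ 160 * A / √n := by
    have hstep (i : ℕ) : dist (μ (n + 2 * i)) (μ (n + 2 * (i + 1))) ≤ 160 / n * A := by
      refine (abs_convPow_polytope_sub_add_two_le F hφ c (n + 2 * i)).trans ?_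
      gcongr
      push_cast
      linarith
    have hsum := dist_le_range_sum_of_dist_le j fun {i} _ => hstep i
    rw [Finset.sum_const, Finset.card_range, nsmul_eq_mul] at hsum
    calc |μ n - μ (n + 2 * j)| ≤ j * (160 / n * A) := hsum
      _ ≤ √n * (160 / n * A) := by gcongr
      _ = 160 * A / √n := by
        rw [div_mul_eq_mul_div, mul_div_assoc', div_eq_div_iff (Nat.cast_pos.2 hn).ne' hs.ne']
        linear_combination 160 * A * hss
  have hone (N : ℕ) (hN : n ≤ N) : |μ N - μ (N + 1)| ≤ 2 * Fintype.card Λ / √n := by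
    refine (abs_convPow_polytope_sub_succ_le F hφ c N).trans ?_
    gcongr
    exact_mod_cast hN.trans N.le_succ
  rw [add_div]
  obtain ⟨j, rfl | rfl⟩ := k.even_or_odd'
  · push_cast at hk
    exact (htwo j (by linarith [j.cast_nonneg (α := ℝ)])).trans
      (le_add_of_nonneg_right (by positivity))
  · push_cast at hk
    exact (abs_sub_le _ (μ (n + 2 * j)) _).trans
      (add_le_add (htwo j (by linarith [j.cast_nonneg (α := ℝ)])) (hone _ (by omega)))

lemma exists_forall_coe_le_iff {φ : E →+ ℝ} (hφ : Measurable φ) (b : EReal) :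
    ∃ (ψ : E →+ ℝ) (c : ℝ), Measurable ψ ∧ ∀ v, (φ v : EReal) ≤ b ↔ ψ v ≤ c := by
  induction b with
  | bot => exact ⟨0, -1, measurable_const, fun v => by simp⟩
  | top => exact ⟨0, 0, measurable_const, fun v => by simp⟩
  | coe c => exact ⟨φ, c, hφ, fun v => EReal.coe_le_coe_iff⟩

lemma exists_polytope_eq {J : Type*} {φ : J → E →+ ℝ} (hφ : ∀ j, Measurable (φ j))
    (a b : J → EReal) :
    ∃ (ψ : J ⊕ J → E →+ ℝ) (c : J ⊕ J → ℝ), (∀ l, Measurable (ψ l)) ∧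
      {v | ∀ j, a j ≤ φ j v ∧ φ j v ≤ b j} = polytope ψ c := by
  choose ψ c hψ hupper using fun j => exists_forall_coe_le_iff (hφ j) (b j)
  choose ψ' c' hψ' hlower using fun j =>
    exists_forall_coe_le_iff (φ := -φ j) (measurable_neg.comp (hφ j)) (-a j)
  refine ⟨Sum.elim ψ' ψ, Sum.elim c' c, Sum.forall.2 ⟨hψ', hψ⟩, ?_⟩
  ext v
  have hneg (j : J) : a j ≤ φ j v ↔ ψ' j v ≤ c' j := by
    rw [← hlower, AddMonoidHom.neg_apply, EReal.coe_neg, EReal.neg_le_neg_iff]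
  simp only [polytope, Set.mem_ofPred_eq, Sum.forall, Sum.elim_inl, Sum.elim_inr, hneg, hupper,
    forall_and]

end Polyhedra

theorem stmt12_general :
    ∃ C : ℕ → ℝ, (∀ m, 0 < C m) ∧
      ∀ {E : Type*} [AddCommGroup E] [MeasurableSpace E] [MeasurableAdd₂ E] [MeasurableNeg E]
        (F : Measure E) [IsProbabilityMeasure F] [F.IsNegInvariant] {m n k : ℕ},
        0 < n → (k : ℝ) ≤ √n → ∀ φ : Fin m → E →+ ℝ, (∀ j, Measurable (φ j)) →
          ∀ a b : Fin m → EReal,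
            |(convPow F n).real {v | ∀ j, a j ≤ φ j v ∧ φ j v ≤ b j} -
              (convPow F (n + k)).real {v | ∀ j, a j ≤ φ j v ∧ φ j v ≤ b j}| ≤ C m / √n := by
  have hbase : 0 < (1 - (1 / 2 : ℝ) ^ (1 / 4 : ℝ))⁻¹ :=
    inv_pos.2 (sub_pos.2 (Real.rpow_lt_one (by norm_num) (by norm_num) (by norm_num)))
  refine ⟨fun m => 160 * (1 - (1 / 2) ^ (1 / 4 : ℝ))⁻¹ ^ (m + m) + 2 * (m + m : ℕ),
    fun m => by positivity, fun F _ _ m n k hn hk φ hφ a b => ?_⟩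
  obtain ⟨ψ, c, hψ, heq⟩ := exists_polytope_eq hφ a b
  simpa only [heq, Fintype.card_sum, Fintype.card_fin] using
    abs_convPow_polytope_sub_add_le F hψ c hn hk

lemma rhoPoly_le_of_forall {d m : ℕ} {G H : Measure (Euc d)} {r : ℝ} (hr : 0 ≤ r)
    (h : ∀ (t : Fin m → Euc d) (a b : Fin m → EReal),
      |G.real {x | ∀ j, a j ≤ (⟪x, t j⟫ : ℝ) ∧ (⟪x, t j⟫ : ℝ) ≤ b j} -
        H.real {x | ∀ j, a j ≤ (⟪x, t j⟫ : ℝ) ∧ (⟪x, t j⟫ : ℝ) ≤ b j}| ≤ r) :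
    rhoPoly m G H ≤ r := by
  refine Real.iSup_le (fun X => Real.iSup_le ?_ hr) hr
  rintro ⟨t, a, b, rfl⟩
  exact h t a b

theorem stmt12 :
    ∃ C : ℕ → ℝ, (∀ m, 0 < C m) ∧
      ∀ (d m n : ℕ), 0 < d → 0 < m → 0 < n →
        ∀ F : Measure (Euc d), IsProbabilityMeasure F → IsSymmMeasure F →
          ∀ k : ℕ, (k : ℝ) ≤ Real.sqrt n →
            rhoPoly m (convPow F n) (convPow F (n + k)) ≤ C m / Real.sqrt n := by
  obtain ⟨C, hC, hbound⟩ := stmt12_general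
  refine ⟨C, hC, fun d m n _ _ hn F _ hF k hk => ?_⟩
  have : F.IsNegInvariant := ⟨hF⟩
  exact rhoPoly_le_of_forall (by have := hC m; positivity) fun t a b =>
    hbound F hn hk (fun j => .mk' (fun x => ⟪x, t j⟫) fun x y => inner_add_left x y (t j))
      (fun j => measurable_id.inner_const) a b
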